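/- Let R be a ring, λ ∈ ℤ, and let p : R → R be an additive map satisfying the weight-λ Rota-Baxter identity: p(x)p(y) = p(p(x)y) + p(x p(y)) + λ·p(xy) for all x, y ∈ R (where λ·r denotes the ℤ-scalar action). Fix n ∈ ℕ and let P act entrywise on n×n matrices over R: (P(A))_{ij} = p(A_{ij}). Then P satisfies the same weight-λ Rota-Baxter identity with respect to the matrix product: P(A)·P(B) = P(P(A)·B) + P(A·P(B)) + λ·P(A·B) for all A, B ∈ M_n(R). -/

import Mathlib

section

variable {S R : Type*} [NonUnitalNonAssocSemiring R]

/-- `IsRotaBaxter c p` says that `p` is a Rota-Baxter operator of weight `c`. Multiplication need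
not be associative or unital, and the weight may be taken from any type acting on `R`. -/
def IsRotaBaxter [SMul S R] (c : S) (p : R →+ R) : Prop :=
  ∀ x y : R, p x * p y = p (p x * y) + p (x * p y) + c • p (x * y)

theorem map_matrix_mul_apply {l m n T F : Type*} [AddCommMonoid T] [FunLike F R T]
    [AddMonoidHomClass F R T] [Fintype m] (f : F) (A : Matrix l m R) (B : Matrix m n R)
    (i : l) (j : n) : f ((A * B) i j) = ∑ k, f (A i k * B k j) := by
  rw [Matrix.mul_apply, map_sum]

variable [DistribSMul S R] {c : S} {p : R →+ R}

theorem matrix_map_rotaBaxter_general {l m n : Type*} [Fintype m] (hp : IsRotaBaxter c p)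
    (A : Matrix l m R) (B : Matrix m n R) :
    A.map p * B.map p =
      (A.map p * B).map p + (A * B.map p).map p + c • (A * B).map p := by
  ext i j
  calc (A.map p * B.map p) i j
      = ∑ k, p (A i k) * p (B k j) := Matrix.mul_apply
    _ = ∑ k, (p (p (A i k) * B k j) + p (A i k * p (B k j)) + c • p (A i k * B k j)) :=
        Finset.sum_congr rfl fun k _ ↦ hp (A i k) (B k j)
    _ = p ((A.map p * B) i j) + p ((A * B.map p) i j) + c • p ((A * B) i j) := by
        simp only [map_matrix_mul_apply, Matrix.map_apply, Finset.sum_add_distrib,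
          Finset.smul_sum]

theorem IsRotaBaxter.mapMatrix {n : Type*} [Fintype n] (hp : IsRotaBaxter c p) :
    IsRotaBaxter c (p.mapMatrix : Matrix n n R →+ Matrix n n R) :=
  matrix_map_rotaBaxter_general hp

end

/-- If `p : R → R` is an additive Rota-Baxter operator of weight `λ` on a ring `R`,
then the entrywise operator `A ↦ A.map p` is a Rota-Baxter operator of weight `λ`
on the matrix ring `M_n(R)`. -/
theorem matrix_map_rotaBaxter {R : Type*} [Ring R] (lam : ℤ) (p : R →+ R)
    (hp : ∀ x y : R, p x * p y = p (p x * y) + p (x * p y) + lam • p (x * y))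
    (n : ℕ) (A B : Matrix (Fin n) (Fin n) R) :
    (A.map p) * (B.map p) =
      ((A.map p * B).map p) + ((A * B.map p).map p) + lam • ((A * B).map p) :=
  IsRotaBaxter.mapMatrix hp A B
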